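/- Let Ω = (−h₁/2, h₁/2)×(−h₂/2, h₂/2) with h₁,h₂ > 0 and Γ = ∂Ω (the whole boundary of the rectangle). Then the sharp constant C₁(Ω,Γ) in the inequality ‖w‖_{L²(Ω)} ≤ C₁‖∇w‖_{L²(Ω)} for all w ∈ H̃¹(Ω,Γ) is equal to (1/π)·max{h₁, h₂}. -/

import Mathlib

open MeasureTheory Real

theorem wirt_anti {a b : ℝ} (hab : a < b) {F F' : ℝ → ℝ} (hF : ∀ x, HasDerivAt F (F' x) x)
    (hF' : Continuous F') (hanti : F b = -F a) :
    ∫ x in a..b, (F x)^2 ≤ ((b-a)/π)^2 * ∫ x in a..b, (F' x)^2 := by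
  have hFc : Continuous F := continuous_iff_continuousAt.2 fun x => (hF x).continuousAt
  have hba : 0 < b - a := by linarith
  let E : ℝ → ℂ := fun x => Complex.exp (Complex.I * π / ((b-a : ℝ) : ℂ) * x)
  have hE : Continuous E := by fun_prop
  have hEn : ∀ x, ‖E x‖ = 1 := by
    intro x
    have : Complex.I * π / ((b-a : ℝ) : ℂ) * x = ((π/(b-a)*x : ℝ) : ℂ) * Complex.I := by
      push_cast; ring
    simp only [E]
    rw [this, Complex.norm_exp_ofReal_mul_I]
  have mem : ∀ f : ℝ → ℂ, Continuous f → MemLp f 2 (volume.restrict (Set.Ioc a b)) := by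
    intro f hf
    have h1 : MemLp f 2 (volume.restrict (Set.Icc a b)) := by
      obtain ⟨C, hC⟩ := (isCompact_Icc (a := a) (b := b)).exists_bound_of_continuousOn hf.continuousOn
      refine MemLp.of_bound hf.aestronglyMeasurable C ?_
      exact (ae_restrict_iff' measurableSet_Icc).2 (Filter.Eventually.of_forall hC)
    exact h1.mono_measure (Measure.restrict_mono Set.Ioc_subset_Icc_self le_rfl)
  have s1 := hasSum_sq_fourierCoeffOn hab (mem (fun x => E x * F x) (by fun_prop))
  have s2 := hasSum_sq_fourierCoeffOn hab (mem (fun x => E x * F' x) (by fun_prop))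
  have key : ∀ n : ℤ, fourierCoeffOn hab (fun x => E x * F' x) n =
      -(Complex.I * π * (1 - 2 * n) / ((b-a : ℝ) : ℂ)) * fourierCoeffOn hab (fun x => E x * F x) n := by
    intro n
    rw [fourierCoeffOn_eq_integral, fourierCoeffOn_eq_integral]
    set k : ℂ := Complex.I * π * (1 - 2 * n) / ((b-a : ℝ) : ℂ) with hk
    have hba' : ((b-a : ℝ) : ℂ) ≠ 0 := by exact_mod_cast hba.ne'
    have hexp : ∀ x : ℝ, (fourier (-n) (x : AddCircle (b - a)) : ℂ) * E x = Complex.exp (k * x) := by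
      intro x
      rw [fourier_coe_apply]
      simp only [E]
      rw [← Complex.exp_add]
      congr 1
      rw [hk]
      push_cast
      push_cast at hba'
      field_simp
      ring
    have ftc : ∫ x in a..b, (Complex.exp (k * x) * F' x + k * (Complex.exp (k*x) * F x)) = 0 := by
      have hd : ∀ x : ℝ, HasDerivAt (fun x : ℝ => Complex.exp (k * x) * (F x : ℂ))
          (Complex.exp (k * x) * F' x + k * (Complex.exp (k*x) * F x)) x := by
        intro x
        have h1 : HasDerivAt (fun x : ℝ => Complex.exp (k * x)) (Complex.exp (k*x) * (k * 1)) x :=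
          ((Complex.ofRealCLM.hasDerivAt (x := x)).const_mul k).cexp
        have := h1.mul (hF x).ofReal_comp
        refine this.congr_deriv ?_
        ring
      rw [intervalIntegral.integral_eq_sub_of_hasDerivAt (fun x _ => hd x)
        (Continuous.intervalIntegrable (by fun_prop) _ _)]
      have : Complex.exp (k * b) = - Complex.exp (k * a) := by
        have : k * b = k * a + (π * Complex.I + ((-n : ℤ) : ℂ) * (2 * π * Complex.I)) := by
          rw [hk]
          push_cast
          push_cast at hba'
          field_simp
          ring
        rw [this, Complex.exp_add, Complex.exp_add, Complex.exp_pi_mul_I, Complex.exp_int_mul_two_pi_mul_I]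
        ring
      rw [this, hanti]
      push_cast; ring
    rw [intervalIntegral.integral_add (Continuous.intervalIntegrable (by fun_prop) _ _)
       (Continuous.intervalIntegrable (by fun_prop) _ _), intervalIntegral.integral_const_mul] at ftc
    simp only [smul_eq_mul, ← mul_assoc, hexp]
    rw [eq_neg_of_add_eq_zero_left ftc]
    simp only [Complex.real_smul]
    ring
  have hle : ∀ n : ℤ, ‖fourierCoeffOn hab (fun x => E x * F x) n‖^2 ≤
     ((b-a)/π)^2 * ‖fourierCoeffOn hab (fun x => E x * F' x) n‖^2 := by
    intro n
    rw [key n, norm_mul, norm_neg, mul_pow, ← mul_assoc]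
    have h1 : ‖Complex.I * π * (1 - 2 * n) / ((b-a : ℝ) : ℂ)‖ = π * |1 - 2 * (n:ℝ)| / (b-a) := by
      rw [norm_div, norm_mul, norm_mul, Complex.norm_I, Complex.norm_real, Complex.norm_real,
        Real.norm_of_nonneg hba.le, Real.norm_of_nonneg pi_pos.le]
      have : (1 - 2 * (n:ℂ)) = ((1 - 2 * n : ℝ) : ℂ) := by push_cast; rfl
      rw [this, Complex.norm_real, Real.norm_eq_abs, one_mul]
    rw [h1]
    have h2 : (1:ℝ) ≤ |1 - 2 * (n:ℝ)| := by
      have : (1:ℤ) ≤ |1 - 2 * n| := Int.one_le_abs (by omega)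
      exact_mod_cast this
    have h3 : ((b-a)/π)^2 * (π * |1 - 2 * (n:ℝ)| / (b-a))^2 = |1 - 2 * (n:ℝ)|^2 := by
      field_simp
    rw [h3]
    have : 1 ≤ |1 - 2 * (n:ℝ)|^2 := one_le_pow₀ h2
    nlinarith [sq_nonneg ‖fourierCoeffOn hab (fun x => E x * F x) n‖]
  have := hasSum_le hle s1 (s2.mul_left (((b-a)/π)^2))
  simp only [norm_mul, hEn, one_mul, Complex.norm_real, Real.norm_eq_abs, sq_abs, smul_eq_mul] at this
  have h4 := mul_le_mul_of_nonneg_left this hba.le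
  have e : ∀ X:ℝ, (b-a)*((b-a)⁻¹ * X) = X := fun X => by field_simp
  rw [e, mul_left_comm, e] at h4
  exact h4

theorem wirt_mid {a b : ℝ} (hab : a < b) {F F' : ℝ → ℝ} (hF : ∀ x, HasDerivAt F (F' x) x)
    (hF' : Continuous F') (p : ℝ) (hp : F a + F b = 2 * p) :
    ∫ x in a..b, (F x - p)^2 ≤ ((b-a)/π)^2 * ∫ x in a..b, (F' x)^2 :=
  wirt_anti hab (F := fun x => F x - p) (fun x => (hF x).sub_const p) hF' (by linarith)

theorem int_sub_sq {a b : ℝ} {F : ℝ → ℝ} (hF : Continuous F) (p : ℝ) :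
    ∫ x in a..b, (F x - p)^2 = (∫ x in a..b, (F x)^2) - 2 * p * (∫ x in a..b, F x) + (b-a) * p^2 := by
  have e : ∀ x, (F x - p)^2 = (F x)^2 - (2*p) * F x + p^2 := fun x => by ring
  simp only [e]
  rw [intervalIntegral.integral_add (Continuous.intervalIntegrable (by fun_prop) _ _)
       (Continuous.intervalIntegrable (by fun_prop) _ _),
     intervalIntegral.integral_sub (Continuous.intervalIntegrable (by fun_prop) _ _)
       (Continuous.intervalIntegrable (by fun_prop) _ _), intervalIntegral.integral_const_mul,
     intervalIntegral.integral_const, smul_eq_mul]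

theorem deriv_under {A B : ℝ} {u uy : ℝ → ℝ → ℝ}
    (hu : Continuous (fun z : ℝ × ℝ => u z.1 z.2)) (huy : Continuous (fun z : ℝ × ℝ => uy z.1 z.2))
    (hd : ∀ x y, HasDerivAt (fun t => u x t) (uy x y) y) (y : ℝ) :
    HasDerivAt (fun t => ∫ x in A..B, u x t) (∫ x in A..B, uy x y) y := by
  obtain ⟨M, hM⟩ := ((isCompact_uIcc (a := A) (b := B)).prod
    (isCompact_closedBall y 1)).exists_bound_of_continuousOn huy.continuousOn
  have hc : ∀ t, Continuous fun x => u x t := fun t =>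
    hu.comp (continuous_id.prodMk continuous_const)
  have hc' : ∀ t, Continuous fun x => uy x t := fun t =>
    huy.comp (continuous_id.prodMk continuous_const)
  refine (intervalIntegral.hasDerivAt_integral_of_dominated_loc_of_deriv_le (F := fun t x => u x t)
    (F' := fun t x => uy x t) (bound := fun _ => M) (Metric.closedBall_mem_nhds y one_pos)
    (Filter.Eventually.of_forall fun t => (hc t).aestronglyMeasurable)
    ((hc y).intervalIntegrable _ _) (hc' y).aestronglyMeasurable ?_ intervalIntegrable_const ?_).2
  · refine Filter.Eventually.of_forall fun x hx t ht => ?_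
    exact hM (x, t) ⟨Set.uIoc_subset_uIcc hx, ht⟩
  · exact Filter.Eventually.of_forall fun x hx t ht => hd x t

theorem core {A B C D : ℝ} (hAB : A < B) (hCD : C < D) {u ux uy : ℝ → ℝ → ℝ}
    (hu : Continuous (fun z : ℝ × ℝ => u z.1 z.2)) (hux : Continuous (fun z : ℝ × ℝ => ux z.1 z.2))
    (huy : Continuous (fun z : ℝ × ℝ => uy z.1 z.2))
    (hdx : ∀ x y, HasDerivAt (fun t => u t y) (ux x y) x)
    (hdy : ∀ x y, HasDerivAt (fun t => u x t) (uy x y) y)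
    (h0 : (∫ t in C..D, (u A t + u B t)) + (∫ s in A..B, (u s C + u s D)) = 0) :
    ∫ y in C..D, ∫ x in A..B, (u x y)^2 ≤
      ((B-A)/π)^2 * (∫ y in C..D, ∫ x in A..B, (ux x y)^2) +
      ((D-C)/π)^2 * (∫ y in C..D, ∫ x in A..B, (uy x y)^2) := by
  have par : ∀ f : ℝ → ℝ → ℝ, Continuous (fun z : ℝ × ℝ => f z.1 z.2) →
      Continuous (fun y => ∫ x in A..B, f x y) := by
    intro f hf
    refine intervalIntegral.continuous_parametric_intervalIntegral_of_continuous' (f := fun y x => f x y) ?_ A B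
    exact hf.comp continuous_swap
  have sx : ∀ f : ℝ → ℝ → ℝ, Continuous (fun z : ℝ × ℝ => f z.1 z.2) → ∀ t, Continuous fun x => f x t :=
    fun f hf t => hf.comp (continuous_id.prodMk continuous_const)
  have sy : ∀ f : ℝ → ℝ → ℝ, Continuous (fun z : ℝ × ℝ => f z.1 z.2) → ∀ t, Continuous fun x => f t x :=
    fun f hf t => hf.comp (continuous_const.prodMk continuous_id)
  set h1 := B - A with hh1
  set h2 := D - C with hh2
  have h1p : 0 < h1 := by linarith
  have h2p : 0 < h2 := by linarith
  let μ : ℝ → ℝ := fun y => h1⁻¹ * ∫ x in A..B, u x y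
  let μ' : ℝ → ℝ := fun y => h1⁻¹ * ∫ x in A..B, uy x y
  let p : ℝ → ℝ := fun y => (u A y + u B y)/2
  have hμ : Continuous μ := (par u hu).const_mul _ 
  have hμ' : Continuous μ' := (par uy huy).const_mul _
  have hμd : ∀ y, HasDerivAt μ (μ' y) y := fun y => (deriv_under hu huy hdy y).const_mul _
  have hp : Continuous p := ((sy u hu A).add (sy u hu B)).div_const _
  have iu : ∀ y, ∫ x in A..B, u x y = h1 * μ y := fun y => by simp only [μ]; field_simp
  have iuy : ∀ y, ∫ x in A..B, uy x y = h1 * μ' y := fun y => by simp only [μ']; field_simp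
  have cU := par (fun x y => (u x y)^2) (by fun_prop)
  have cX := par (fun x y => (ux x y)^2) (by fun_prop)
  have cY := par (fun x y => (uy x y)^2) (by fun_prop)
  have II : ∀ {f : ℝ → ℝ}, Continuous f → IntervalIntegrable f volume C D :=
    fun hf => hf.intervalIntegrable _ _
  -- step 1
  have st1 : ∫ y in C..D, ((∫ x in A..B, (u x y)^2) - h1 * (μ y)^2 + h1 * (μ y - p y)^2) ≤
      ∫ y in C..D, (h1/π)^2 * ∫ x in A..B, (ux x y)^2 := by
    refine intervalIntegral.integral_mono_on hCD.le (II (by fun_prop)) (II (by fun_prop)) ?_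
    intro y _
    have := wirt_mid hAB (fun x => hdx x y) (sx ux hux y) (p y) (by simp only [p]; ring)
    rw [int_sub_sq (sx u hu y), iu] at this
    linarith
  rw [intervalIntegral.integral_add (II (by fun_prop)) (II (by fun_prop)),
     intervalIntegral.integral_sub (II (by fun_prop)) (II (by fun_prop)),
     intervalIntegral.integral_const_mul, intervalIntegral.integral_const_mul,
     intervalIntegral.integral_const_mul] at st1
  -- step 2
  obtain ⟨q, hq⟩ : ∃ q, μ C + μ D = 2 * q := ⟨(μ C + μ D)/2, by ring⟩
  have st2 := wirt_mid hCD hμd hμ' q hq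
  have st3 : ∫ y in C..D, h1 * (μ' y)^2 ≤ ∫ y in C..D, ∫ x in A..B, (uy x y)^2 := by
    refine intervalIntegral.integral_mono_on hCD.le (II (by fun_prop)) (II cY) ?_
    intro y _
    have h : 0 ≤ ∫ x in A..B, (uy x y - μ' y)^2 :=
      intervalIntegral.integral_nonneg hAB.le fun x _ => sq_nonneg _
    rw [int_sub_sq (sx uy huy y), iuy] at h
    linarith
  rw [intervalIntegral.integral_const_mul] at st3
  -- step 3
  obtain ⟨P, hP⟩ : ∃ P, ∫ y in C..D, p y = h2 * P := ⟨h2⁻¹ * ∫ y in C..D, p y, by field_simp⟩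
  obtain ⟨m, hm⟩ : ∃ m, ∫ y in C..D, μ y = h2 * m := ⟨h2⁻¹ * ∫ y in C..D, μ y, by field_simp⟩
  have hc : h2 * P + h1 * q = 0 := by
    have e1 : ∫ t in C..D, (u A t + u B t) = 2 * (h2 * P) := by
      rw [← hP, ← intervalIntegral.integral_const_mul]
      simp only [p]
      congr 1; ext t; ring
    have e2 : ∫ s in A..B, (u s C + u s D) = h1 * (2 * q) := by
      rw [intervalIntegral.integral_add ((sx u hu C).intervalIntegrable _ _)
        ((sx u hu D).intervalIntegrable _ _), iu, iu, ← hq]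
      ring
    rw [e1, e2] at h0
    linarith
  have st4 : h2 * (m - P)^2 ≤ ∫ y in C..D, (μ y - p y)^2 := by
    have h : 0 ≤ ∫ y in C..D, ((μ y - p y) - (m - P))^2 :=
      intervalIntegral.integral_nonneg hCD.le fun x _ => sq_nonneg _
    rw [int_sub_sq (F := fun y => μ y - p y) (hμ.sub hp), intervalIntegral.integral_sub (II hμ) (II hp), hP, hm] at h
    nlinarith
  rw [int_sub_sq hμ, hm] at st2
  have hPq : P * q ≤ 0 := by
    have : q = -(h2/h1) * P := by field_simp; linarith
    rw [this]
    have : 0 ≤ h2/h1 * P^2 := by positivity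
    nlinarith
  have st5 : 0 ≤ (m-P)^2 + q^2 - 2*q*m := by nlinarith [sq_nonneg (m - P - q)]
  have st6 := mul_le_mul_of_nonneg_left st2 h1p.le
  have st7 := mul_le_mul_of_nonneg_left st4 h1p.le
  have st8 := mul_le_mul_of_nonneg_left st3 (sq_nonneg (h2/π))
  have st9 := mul_nonneg (mul_nonneg h1p.le h2p.le) st5
  rw [← hh2] at st6
  linarith

theorem rect_int {A B C D : ℝ} (hAB : A ≤ B) (hCD : C ≤ D) (f : EuclideanSpace ℝ (Fin 2) → ℝ)
    (hf : Continuous f) :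
    ∫ x in {x : EuclideanSpace ℝ (Fin 2) | x 0 ∈ Set.Ioo A B ∧ x 1 ∈ Set.Ioo C D}, f x =
      ∫ y in C..D, ∫ x in A..B, f !₂[x, y] := by
  have mp : MeasurePreserving (fun z : ℝ × ℝ => (!₂[z.1, z.2] : EuclideanSpace ℝ (Fin 2))) :=
    (PiLp.volume_preserving_toLp (Fin 2)).comp (volume_preserving_finTwoArrow ℝ).symm
  have me : MeasurableEmbedding (fun z : ℝ × ℝ => (!₂[z.1, z.2] : EuclideanSpace ℝ (Fin 2))) :=
    (MeasurableEquiv.toLp 2 (Fin 2 → ℝ)).measurableEmbedding.comp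
      (MeasurableEquiv.finTwoArrow (α := ℝ)).symm.measurableEmbedding
  have hc : Continuous (fun z : ℝ × ℝ => f !₂[z.1, z.2]) := by fun_prop
  rw [← mp.setIntegral_preimage_emb me]
  have : (fun z : ℝ × ℝ => (!₂[z.1, z.2] : EuclideanSpace ℝ (Fin 2))) ⁻¹'
      {x : EuclideanSpace ℝ (Fin 2) | x 0 ∈ Set.Ioo A B ∧ x 1 ∈ Set.Ioo C D} =
      Set.Ioo A B ×ˢ Set.Ioo C D := by
    ext z; simp [Set.mem_prod]
  have hint : IntegrableOn (fun z : ℝ × ℝ => f !₂[z.1, z.2]) (Set.Icc A B ×ˢ Set.Icc C D)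
      (volume : Measure (ℝ × ℝ)) :=
    hc.continuousOn.integrableOn_compact (isCompact_Icc.prod isCompact_Icc)
  rw [this, Measure.volume_eq_prod, setIntegral_prod]
  · rw [← intervalIntegral_intervalIntegral_swap (F := fun x y => f !₂[x, y])]
    · rw [intervalIntegral.integral_of_le hAB, integral_Ioc_eq_integral_Ioo]
      congr 1; ext x
      rw [intervalIntegral.integral_of_le hCD, integral_Ioc_eq_integral_Ioo]
    · rw [Set.uIoc_of_le hAB, Set.uIoc_of_le hCD]
      exact hint.mono_set (Set.prod_mono Set.Ioc_subset_Icc_self Set.Ioc_subset_Icc_self)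
  · exact hint.mono_set (Set.prod_mono Set.Ioo_subset_Icc_self Set.Ioo_subset_Icc_self)

theorem norm_grad_sq (w : EuclideanSpace ℝ (Fin 2) → ℝ) (x : EuclideanSpace ℝ (Fin 2)) :
    ‖gradient w x‖^2 = (fderiv ℝ w x !₂[1, 0])^2 + (fderiv ℝ w x !₂[0, 1])^2 := by
  have h : ∀ v, fderiv ℝ w x v = inner ℝ (gradient w x) v := by
    intro v
    simp [gradient, InnerProductSpace.toDual_symm_apply]
  have e0 : inner ℝ (gradient w x) (!₂[1, 0] : EuclideanSpace ℝ (Fin 2)) = gradient w x 0 := by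
    rw [PiLp.inner_apply, Fin.sum_univ_two]; simp
  have e1 : inner ℝ (gradient w x) (!₂[0, 1] : EuclideanSpace ℝ (Fin 2)) = gradient w x 1 := by
    rw [PiLp.inner_apply, Fin.sum_univ_two]; simp
  rw [EuclideanSpace.norm_sq_eq, h, h, e0, e1, Fin.sum_univ_two]
  simp only [Real.norm_eq_abs, sq_abs]

theorem hasDerivAt_x {w : EuclideanSpace ℝ (Fin 2) → ℝ} (hw : ContDiff ℝ 1 w) (x y : ℝ) :
    HasDerivAt (fun t => w !₂[t, y]) (fderiv ℝ w !₂[x, y] !₂[1, 0]) x := by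
  have h1 : HasDerivAt (fun t : ℝ => (!₂[t, y] : EuclideanSpace ℝ (Fin 2))) !₂[1, 0] x := by
    have : (fun t : ℝ => (!₂[t, y] : EuclideanSpace ℝ (Fin 2))) =
        fun t => t • !₂[1, 0] + !₂[0, y] := by
      ext t i; fin_cases i <;> simp
    rw [this]
    simpa using ((hasDerivAt_id x).smul_const (!₂[1, 0] : EuclideanSpace ℝ (Fin 2))).add_const
      (!₂[0, y] : EuclideanSpace ℝ (Fin 2))
  exact ((hw.differentiable one_ne_zero _).hasFDerivAt).comp_hasDerivAt x h1

theorem hasDerivAt_y {w : EuclideanSpace ℝ (Fin 2) → ℝ} (hw : ContDiff ℝ 1 w) (x y : ℝ) :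
    HasDerivAt (fun t => w !₂[x, t]) (fderiv ℝ w !₂[x, y] !₂[0, 1]) y := by
  have h1 : HasDerivAt (fun t : ℝ => (!₂[x, t] : EuclideanSpace ℝ (Fin 2))) !₂[0, 1] y := by
    have : (fun t : ℝ => (!₂[x, t] : EuclideanSpace ℝ (Fin 2))) =
        fun t => t • !₂[0, 1] + !₂[x, 0] := by
      ext t i; fin_cases i <;> simp
    rw [this]
    simpa using ((hasDerivAt_id y).smul_const (!₂[0, 1] : EuclideanSpace ℝ (Fin 2))).add_const
      (!₂[x, 0] : EuclideanSpace ℝ (Fin 2))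
  exact ((hw.differentiable one_ne_zero _).hasFDerivAt).comp_hasDerivAt y h1

theorem cont_fd {w : EuclideanSpace ℝ (Fin 2) → ℝ} (hw : ContDiff ℝ 1 w)
    (v : EuclideanSpace ℝ (Fin 2)) : Continuous (fun x => fderiv ℝ w x v) :=
  (hw.continuous_fderiv one_ne_zero).clm_apply continuous_const

theorem grad_int {A B C D : ℝ} (hAB : A ≤ B) (hCD : C ≤ D) {w : EuclideanSpace ℝ (Fin 2) → ℝ}
    (hw : ContDiff ℝ 1 w) :
    ∫ x in {x : EuclideanSpace ℝ (Fin 2) | x 0 ∈ Set.Ioo A B ∧ x 1 ∈ Set.Ioo C D},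
        ‖gradient w x‖^2 =
      (∫ y in C..D, ∫ x in A..B, (fderiv ℝ w !₂[x, y] !₂[1, 0])^2) +
      (∫ y in C..D, ∫ x in A..B, (fderiv ℝ w !₂[x, y] !₂[0, 1])^2) := by
  have c1 := cont_fd hw !₂[1, 0]
  have c2 := cont_fd hw !₂[0, 1]
  simp only [norm_grad_sq]
  rw [rect_int hAB hCD _ (by fun_prop)]
  have par : ∀ f : EuclideanSpace ℝ (Fin 2) → ℝ, Continuous f →
      Continuous (fun y => ∫ x in A..B, f !₂[x, y]) := by
    intro f hf
    refine intervalIntegral.continuous_parametric_intervalIntegral_of_continuous'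
      (f := fun y x => f !₂[x, y]) ?_ A B
    fun_prop
  rw [← intervalIntegral.integral_add]
  · congr 1; ext y
    rw [intervalIntegral.integral_add]
    · exact Continuous.intervalIntegrable (c1.comp (by fun_prop) |>.pow 2) _ _
    · exact Continuous.intervalIntegrable (c2.comp (by fun_prop) |>.pow 2) _ _
  · exact (par _ (c1.pow 2)).intervalIntegrable _ _
  · exact (par _ (c2.pow 2)).intervalIntegrable _ _

theorem sin_int {h : ℝ} (hh : 0 < h) :
    ∫ x in (-(h/2))..(h/2), (Real.sin (π/h*x))^2 = h/2 := by
  have hc : π/h ≠ 0 := by positivity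
  rw [intervalIntegral.integral_comp_mul_left (fun x => Real.sin x ^ 2) hc, integral_sin_sq]
  have e1 : π/h * (h/2) = π/2 := by field_simp
  have e2 : π/h * -(h/2) = -(π/2) := by field_simp
  rw [e1, e2]; simp; field_simp

theorem cos_int {h : ℝ} (hh : 0 < h) :
    ∫ x in (-(h/2))..(h/2), (Real.cos (π/h*x))^2 = h/2 := by
  have hc : π/h ≠ 0 := by positivity
  rw [intervalIntegral.integral_comp_mul_left (fun x => Real.cos x ^ 2) hc, integral_cos_sq]
  have e1 : π/h * (h/2) = π/2 := by field_simp
  have e2 : π/h * -(h/2) = -(π/2) := by field_simp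
  rw [e1, e2]; simp; field_simp

theorem sin_odd_int (c h : ℝ) : ∫ x in (-(h/2))..(h/2), Real.sin (c*x) = 0 := by
  have := intervalIntegral.integral_comp_neg (a := -(h/2)) (b := h/2) (fun x => Real.sin (c*x))
  simp only [mul_neg, Real.sin_neg, neg_neg, intervalIntegral.integral_neg] at this
  linarith

theorem sin_odd_int2 (c h : ℝ) :
    ∫ x in (-(h/2))..(h/2), (Real.sin (c*x) + Real.sin (c*x)) = 0 := by
  simp only [← two_mul]
  rw [intervalIntegral.integral_const_mul, sin_odd_int, mul_zero]

theorem final_bd {h k C : ℝ} (hh : 0 < h) (hk : 0 < k)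
    (H : Real.sqrt (k * (h/2)) ≤ C * Real.sqrt (k * ((π/h)^2 * (h/2)))) : π⁻¹ * h ≤ C := by
  have e : k * ((π/h)^2 * (h/2)) = (π/h)^2 * (k * (h/2)) := by ring
  have hp : 0 < π / h := by positivity
  rw [e, Real.sqrt_mul (sq_nonneg (π/h)), Real.sqrt_sq hp.le, ← mul_assoc] at H
  have h1 : 0 < Real.sqrt (k * (h/2)) := Real.sqrt_pos.2 (by positivity)
  have h2 : 1 ≤ C * (π/h) := le_of_mul_le_mul_right (by linarith) h1
  have h3 : π⁻¹ * h * (π/h) = 1 := by field_simp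
  exact le_of_mul_le_mul_right (by linarith) hp

/-- The sharp constant `C₁(Ω,Γ)` in `‖w‖_{L²(Ω)} ≤ C₁ ‖∇w‖_{L²(Ω)}` for functions
with zero mean trace on `Γ`, where `Ω = (−h₁/2,h₁/2) × (−h₂/2,h₂/2)` and
`Γ = ∂Ω` is the whole boundary of the rectangle, equals `(1/π) · max {h₁, h₂}`.
The mean over `∂Ω` is written as the sum of the integrals over the four sides. -/
theorem rectangle_whole_boundary_C1 (h₁ h₂ : ℝ) (hh₁ : 0 < h₁) (hh₂ : 0 < h₂) :
    IsLeast {C : ℝ |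
      ∀ w : EuclideanSpace ℝ (Fin 2) → ℝ, ContDiff ℝ 1 w →
        ((∫ t in (-(h₂/2))..(h₂/2), (w !₂[-(h₁/2), t] + w !₂[h₁/2, t])) +
         (∫ s in (-(h₁/2))..(h₁/2), (w !₂[s, -(h₂/2)] + w !₂[s, h₂/2]))) = 0 →
        Real.sqrt (∫ x in {x : EuclideanSpace ℝ (Fin 2) |
            x 0 ∈ Set.Ioo (-(h₁/2)) (h₁/2) ∧ x 1 ∈ Set.Ioo (-(h₂/2)) (h₂/2)},
            (w x) ^ 2) ≤
          C * Real.sqrt (∫ x in {x : EuclideanSpace ℝ (Fin 2) |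
            x 0 ∈ Set.Ioo (-(h₁/2)) (h₁/2) ∧ x 1 ∈ Set.Ioo (-(h₂/2)) (h₂/2)},
            ‖gradient w x‖ ^ 2)}
      (π⁻¹ * max h₁ h₂) := by
  constructor
  · intro w hw h0
    have c1 := cont_fd hw !₂[1, 0]
    have c2 := cont_fd hw !₂[0, 1]
    have l1 : -(h₁/2) < h₁/2 := by linarith
    have l2 : -(h₂/2) < h₂/2 := by linarith
    have hwc := hw.continuous
    have key := core (u := fun x y => w !₂[x, y]) (ux := fun x y => fderiv ℝ w !₂[x, y] !₂[1, 0])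
      (uy := fun x y => fderiv ℝ w !₂[x, y] !₂[0, 1]) l1 l2 (by fun_prop)
      (c1.comp (by fun_prop)) (c2.comp (by fun_prop)) (hasDerivAt_x hw) (hasDerivAt_y hw) h0
    rw [rect_int l1.le l2.le (fun x => w x ^ 2) (hwc.pow 2), grad_int l1.le l2.le hw]
    set X := ∫ y in (-(h₂/2))..(h₂/2), ∫ x in (-(h₁/2))..(h₁/2), (fderiv ℝ w !₂[x, y] !₂[1, 0])^2
    set Y := ∫ y in (-(h₂/2))..(h₂/2), ∫ x in (-(h₁/2))..(h₁/2), (fderiv ℝ w !₂[x, y] !₂[0, 1])^2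
    have hX : 0 ≤ X := intervalIntegral.integral_nonneg l2.le fun y _ =>
      intervalIntegral.integral_nonneg l1.le fun x _ => sq_nonneg _
    have hY : 0 ≤ Y := intervalIntegral.integral_nonneg l2.le fun y _ =>
      intervalIntegral.integral_nonneg l1.le fun x _ => sq_nonneg _
    have hm : 0 ≤ π⁻¹ * max h₁ h₂ := by positivity
    rw [← Real.sqrt_sq hm, ← Real.sqrt_mul (sq_nonneg _)]
    apply Real.sqrt_le_sqrt
    refine key.trans ?_
    have a1 : ((h₁/2 - -(h₁/2))/π)^2 ≤ (π⁻¹ * max h₁ h₂)^2 := by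
      have : (h₁/2 - -(h₁/2))/π = π⁻¹ * h₁ := by ring
      rw [this]
      gcongr
      exact le_max_left _ _
    have a2 : ((h₂/2 - -(h₂/2))/π)^2 ≤ (π⁻¹ * max h₁ h₂)^2 := by
      have : (h₂/2 - -(h₂/2))/π = π⁻¹ * h₂ := by ring
      rw [this]
      gcongr
      exact le_max_right _ _
    rw [mul_add]
    gcongr
  · intro C hC
    have l1 : -(h₁/2) ≤ h₁/2 := by linarith
    have l2 : -(h₂/2) ≤ h₂/2 := by linarith
    have hds : ∀ c x : ℝ, HasDerivAt (fun t => Real.sin (c * t)) (Real.cos (c*x) * (c * 1)) x :=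
      fun c x => ((hasDerivAt_id x).const_mul c).sin
    rw [mul_max_of_nonneg _ _ (by positivity)]
    refine max_le ?_ ?_
    · have hw : ContDiff ℝ 1 (fun x : EuclideanSpace ℝ (Fin 2) => Real.sin (π/h₁ * x 0)) := by
        fun_prop
      have := hC _ hw (by
        simp [sin_odd_int2])
      rw [rect_int l1 l2 (fun x : EuclideanSpace ℝ (Fin 2) => Real.sin (π/h₁ * x 0) ^ 2)
        (hw.continuous.pow 2), grad_int l1 l2 hw] at this
      have ex : ∀ x y : ℝ, fderiv ℝ (fun x : EuclideanSpace ℝ (Fin 2) => Real.sin (π/h₁ * x 0))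
          !₂[x, y] !₂[1, 0] = Real.cos (π/h₁*x) * (π/h₁ * 1) := fun x y =>
        (hasDerivAt_x hw x y).unique (by simpa using hds (π/h₁) x)
      have ey : ∀ x y : ℝ, fderiv ℝ (fun x : EuclideanSpace ℝ (Fin 2) => Real.sin (π/h₁ * x 0))
          !₂[x, y] !₂[0, 1] = 0 := fun x y =>
        (hasDerivAt_y hw x y).unique (by simpa using hasDerivAt_const y (Real.sin (π/h₁ * x)))
      simp only [ex, ey] at this
      apply final_bd hh₁ hh₂
      convert this using 2
      · simp [sin_int hh₁]; ring
      · simp [mul_pow, cos_int hh₁]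
        ring_nf
    · have hw : ContDiff ℝ 1 (fun x : EuclideanSpace ℝ (Fin 2) => Real.sin (π/h₂ * x 1)) := by
        fun_prop
      have := hC _ hw (by
        simp [sin_odd_int2])
      rw [rect_int l1 l2 (fun x : EuclideanSpace ℝ (Fin 2) => Real.sin (π/h₂ * x 1) ^ 2)
        (hw.continuous.pow 2), grad_int l1 l2 hw] at this
      have ex : ∀ x y : ℝ, fderiv ℝ (fun x : EuclideanSpace ℝ (Fin 2) => Real.sin (π/h₂ * x 1))
          !₂[x, y] !₂[1, 0] = 0 := fun x y =>
        (hasDerivAt_x hw x y).unique (by simpa using hasDerivAt_const x (Real.sin (π/h₂ * y)))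
      have ey : ∀ x y : ℝ, fderiv ℝ (fun x : EuclideanSpace ℝ (Fin 2) => Real.sin (π/h₂ * x 1))
          !₂[x, y] !₂[0, 1] = Real.cos (π/h₂*y) * (π/h₂ * 1) := fun x y =>
        (hasDerivAt_y hw x y).unique (by simpa using hds (π/h₂) y)
      simp only [ex, ey] at this
      apply final_bd hh₂ hh₁
      convert this using 2
      · simp [sin_int hh₂]
      · simp [mul_pow, cos_int hh₂]
        ring_nf
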